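/- Let u, u* be AB-entropy solutions of u_t + f(x,u)_x = 0 on ℝ × [0,T], let x ∈ ℝ, and let ζ ∈ C(u*, x). Then F(ζ, u) = F(ζ, u*) if and only if ζ ∈ C(u*, x) ∩ C(u, x), i.e. if and only if ζ is also an AB-genuine/interface characteristic for u. -/

import Mathlib

open MeasureTheory Set Filter

noncomputable section

/-- The discontinuous flux `f(x,u) = f_l(u)` for `x < 0`, `f_r(u)` for `x > 0`
(the value at the interface is taken to be `f_r(u)`). -/
def dflux (fl fr : ℝ → ℝ) (x u : ℝ) : ℝ := if x < 0 then fl u else fr u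

/-- The connection function `c^{AB}`. -/
def cAB (A B : ℝ) (x : ℝ) : ℝ := if x ≤ 0 then A else B

/-- An `AB`-entropy solution of `u_t + f(x,u)_x = 0` on `ℝ × [0,∞)` with
initial datum `u0`, for the flux `f(x,·) = fl` on `x<0` and `fr` on `x>0`,
relative to the connection `(A,B)`.  The structure bundles the solution `u`
(as a function of `(x,t)`), its one-sided spatial limits `um x t = u(x-,t)` and
`up x t = u(x+,t)` (for `t > 0`), the weak (distributional) formulation, the
Kružkov entropy inequalities away from the interface, the `AB`-interface
entropy inequality, `L¹_loc`-continuity in time and the initial condition. -/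
structure ABSol (fl fr : ℝ → ℝ) (A B : ℝ) (u0 : ℝ → ℝ) where
  u : ℝ → ℝ → ℝ
  meas : Measurable (Function.uncurry u)
  bdd : ∃ M : ℝ, ∀ x t, |u x t| ≤ M
  um : ℝ → ℝ → ℝ
  up : ℝ → ℝ → ℝ
  um_spec : ∀ x t, 0 < t →
    Tendsto (fun y => u y t) (nhdsWithin x (Iio x)) (nhds (um x t))
  up_spec : ∀ x t, 0 < t →
    Tendsto (fun y => u y t) (nhdsWithin x (Ioi x)) (nhds (up x t))
  weak : ∀ φ : ℝ → ℝ → ℝ,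
    ContDiff ℝ 1 (fun p : ℝ × ℝ => φ p.1 p.2) →
    HasCompactSupport (fun p : ℝ × ℝ => φ p.1 p.2) →
    (∀ x t, t ≤ 0 → φ x t = 0) →
    (∫ p : ℝ × ℝ, (u p.1 p.2 * deriv (fun s => φ p.1 s) p.2 +
        dflux fl fr p.1 (u p.1 p.2) * deriv (fun y => φ y p.2) p.1)) = 0
  kruzkov_l : ∀ (k : ℝ) (φ : ℝ → ℝ → ℝ),
    ContDiff ℝ 1 (fun p : ℝ × ℝ => φ p.1 p.2) →
    HasCompactSupport (fun p : ℝ × ℝ => φ p.1 p.2) →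
    (∀ x t, 0 ≤ φ x t) →
    (∀ x t, 0 ≤ x ∨ t ≤ 0 → φ x t = 0) →
    0 ≤ ∫ p : ℝ × ℝ, (|u p.1 p.2 - k| * deriv (fun s => φ p.1 s) p.2 +
        Real.sign (u p.1 p.2 - k) * (fl (u p.1 p.2) - fl k) *
          deriv (fun y => φ y p.2) p.1)
  kruzkov_r : ∀ (k : ℝ) (φ : ℝ → ℝ → ℝ),
    ContDiff ℝ 1 (fun p : ℝ × ℝ => φ p.1 p.2) →
    HasCompactSupport (fun p : ℝ × ℝ => φ p.1 p.2) →
    (∀ x t, 0 ≤ φ x t) →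
    (∀ x t, x ≤ 0 ∨ t ≤ 0 → φ x t = 0) →
    0 ≤ ∫ p : ℝ × ℝ, (|u p.1 p.2 - k| * deriv (fun s => φ p.1 s) p.2 +
        Real.sign (u p.1 p.2 - k) * (fr (u p.1 p.2) - fr k) *
          deriv (fun y => φ y p.2) p.1)
  interfaceEntropy : ∀ φ : ℝ → ℝ → ℝ,
    ContDiff ℝ 1 (fun p : ℝ × ℝ => φ p.1 p.2) →
    HasCompactSupport (fun p : ℝ × ℝ => φ p.1 p.2) →
    (∀ x t, 0 ≤ φ x t) →
    (∀ x t, t ≤ 0 → φ x t = 0) →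
    0 ≤ ∫ p : ℝ × ℝ, (|u p.1 p.2 - cAB A B p.1| * deriv (fun s => φ p.1 s) p.2 +
        Real.sign (u p.1 p.2 - cAB A B p.1) *
          (dflux fl fr p.1 (u p.1 p.2) - dflux fl fr p.1 (cAB A B p.1)) *
          deriv (fun y => φ y p.2) p.1)
  timeCont : ∀ (r t₀ : ℝ), 0 ≤ t₀ →
    Tendsto (fun t => ∫ x in Icc (-r) r, |u x t - u x t₀|)
      (nhdsWithin t₀ (Ici 0)) (nhds 0)
  init : ∀ᵐ x : ℝ ∂volume, u x 0 = u0 x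

/-- `AB`-genuine/interface characteristic for the `AB`-entropy solution `sol`,
on the time interval `[0,T]`, where `γ = f_l(A) = f_r(B)`. -/
def IsABgic (T : ℝ) (fl fr : ℝ → ℝ) (γ : ℝ) {A B : ℝ} {u0 : ℝ → ℝ}
    (sol : ABSol fl fr A B u0) (ζ : ℝ → ℝ) : Prop :=
  (∃ K : NNReal, LipschitzOnWith K ζ (Icc 0 T)) ∧
  (∀ᵐ t ∂(volume.restrict (Icc 0 T)),
    (ζ t < 0 → HasDerivAt ζ (deriv fl (sol.um (ζ t) t)) t ∧
      deriv fl (sol.um (ζ t) t) = deriv fl (sol.up (ζ t) t)) ∧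
    (0 < ζ t → HasDerivAt ζ (deriv fr (sol.um (ζ t) t)) t ∧
      deriv fr (sol.um (ζ t) t) = deriv fr (sol.up (ζ t) t)) ∧
    (ζ t = 0 → fl (sol.um 0 t) = γ ∧ fr (sol.up 0 t) = γ))

/-- `C(u,x)`: the set of `AB`-genuine/interface characteristics of `sol`
reaching `x` at time `T`. -/
def charSet (T : ℝ) (fl fr : ℝ → ℝ) (γ : ℝ) {A B : ℝ} {u0 : ℝ → ℝ}
    (sol : ABSol fl fr A B u0) (x : ℝ) : Set (ℝ → ℝ) :=
  {ζ | IsABgic T fl fr γ sol ζ ∧ ζ T = x}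

/-- `C₀(u,x)`: the set of initial positions `ζ(0)` of characteristics in `C(u,x)`. -/
def charSet0 (T : ℝ) (fl fr : ℝ → ℝ) (γ : ℝ) {A B : ℝ} {u0 : ℝ → ℝ}
    (sol : ABSol fl fr A B u0) (x : ℝ) : Set ℝ :=
  (fun ζ : ℝ → ℝ => ζ 0) '' charSet T fl fr γ sol x

/-- Membership in `L^∞(ℝ)`: measurable and (essentially) bounded. -/
def IsLinf (g : ℝ → ℝ) : Prop :=
  Measurable g ∧ ∃ M : ℝ, ∀ᵐ x : ℝ ∂volume, |g x| ≤ M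

/-- `ω ∈ A^{[AB]}(T)`: the profile `ω` is attainable at time `T`. -/
def Attainable (T : ℝ) (fl fr : ℝ → ℝ) (A B : ℝ) (ω : ℝ → ℝ) : Prop :=
  ∃ u0 : ℝ → ℝ, IsLinf u0 ∧
    ∃ sol : ABSol fl fr A B u0, ∀ᵐ x : ℝ ∂volume, sol.u x T = ω x

/-- `I_T^{[AB]}(ω)`: the set of (bounded) initial data whose `AB`-entropy
solution coincides a.e. with `ω` at time `T`. -/
def InitialSet (T : ℝ) (fl fr : ℝ → ℝ) (A B : ℝ) (ω : ℝ → ℝ) : Set (ℝ → ℝ) :=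
  {u0 | IsLinf u0 ∧
    ∃ sol : ABSol fl fr A B u0, ∀ᵐ x : ℝ ∂volume, sol.u x T = ω x}

/-- `x` is a point of continuity of `ω`: the one-sided limits exist and coincide. -/
def ContinuityPt (ω : ℝ → ℝ) (x : ℝ) : Prop :=
  ∃ l : ℝ, Tendsto ω (nhdsWithin x (Iio x)) (nhds l) ∧
    Tendsto ω (nhdsWithin x (Ioi x)) (nhds l)

/-- `F_t(α−, sol)`: the total flux of the field `(f(x,u), u)` through the curve
`s ↦ (α(s), s)`, `s ∈ [t,T]`, computed with the left traces of `sol`. -/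
def Fminus (fl fr : ℝ → ℝ) (T : ℝ) {A B : ℝ} {u0 : ℝ → ℝ}
    (sol : ABSol fl fr A B u0) (t : ℝ) (α : ℝ → ℝ) : ℝ :=
  ∫ s in t..T,
    ((if α s ≤ 0 then fl (sol.um (α s) s) else fr (sol.um (α s) s)) -
      deriv α s * sol.um (α s) s)

/-- `F_t(α+, sol)`: the total flux of the field `(f(x,u), u)` through the curve
`s ↦ (α(s), s)`, `s ∈ [t,T]`, computed with the right traces of `sol`. -/
def Fplus (fl fr : ℝ → ℝ) (T : ℝ) {A B : ℝ} {u0 : ℝ → ℝ}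
    (sol : ABSol fl fr A B u0) (t : ℝ) (α : ℝ → ℝ) : ℝ :=
  ∫ s in t..T,
    ((if α s < 0 then fl (sol.up (α s) s) else fr (sol.up (α s) s)) -
      deriv α s * sol.up (α s) s)

/-!
Testing a conservation law or an entropy inequality `∂_t U + ∂_x Q ≤ 0` with a bump of width `ε`
moving along a (slightly smoothed) Lipschitz curve `α`, and letting `ε → 0`, shows that the flux
`Q - α' U` through the curve computed from the right is at most the one computed from the left, for
almost every time. For the equation itself this is the Rankine–Hugoniot relation; for the interface
entropy, together with convexity, it gives `f_l(A) ≤ f_r(u(0+,t))`.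

Let `ζ` be a characteristic of `u*`. Off the interface `ζ' = f'(u*)`, and convexity says that
`v ↦ f(v) - ζ' v` has its minimum at `u*`; on the interface `ζ' = 0` almost everywhere and the flux
of `u*` is the least admissible one, `f_l(A)`. So the flux density of `u` through `ζ` dominates that
of `u*` almost everywhere, and the integrals agree exactly when the densities do. By strict
convexity and the Rankine–Hugoniot relation this says that both traces of `u` coincide with `u*`
off the interface and that both carry the flux `f_l(A)` on it.
-/

open scoped Topology ContDiff NNReal

/-! ### Convexity and differentiation -/

section Calculus

variable {f : ℝ → ℝ} {s : Set ℝ} {v w : ℝ}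

theorem isMinOn_sub_deriv_mul (hf : ConvexOn ℝ s f) (hw : w ∈ interior s)
    (hd : DifferentiableAt ℝ f w) : IsMinOn (fun v ↦ f v - deriv f w * v) s w := by
  have hconvex : ConvexOn ℝ s fun v ↦ f v - deriv f w * v :=
    hf.sub ((LinearMap.mulLeft ℝ (deriv f w)).concaveOn hf.1)
  have hderiv : HasDerivAt (fun v ↦ f v - deriv f w * v) 0 w :=
    (hd.hasDerivAt.sub ((hasDerivAt_id w).const_mul (deriv f w))).congr_deriv (by ring)
  exact hconvex.isMinOn_of_rightDeriv_eq_zero hw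
    (hderiv.hasDerivWithinAt.derivWithin (uniqueDiffWithinAt_Ioi w))

theorem le_of_deriv_mul_sub_nonneg (hf : ConvexOn ℝ s f) (hw : w ∈ interior s) (hv : v ∈ s)
    (hd : DifferentiableAt ℝ f w) (h : 0 ≤ deriv f w * (v - w)) : f w ≤ f v := by
  have hmin : f w - deriv f w * w ≤ f v - deriv f w * v := isMinOn_sub_deriv_mul hf hw hd hv
  linarith

theorem sub_deriv_mul_eq_iff (hf : StrictConvexOn ℝ s f) (hw : w ∈ interior s) (hv : v ∈ s)
    (hd : DifferentiableAt ℝ f w) :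
    f v - deriv f w * v = f w - deriv f w * w ↔ v = w := by
  refine ⟨fun heq ↦ ?_, fun h ↦ h ▸ rfl⟩
  have hstrict : StrictConvexOn ℝ s fun v ↦ f v - deriv f w * v :=
    hf.sub_concaveOn ((LinearMap.mulLeft ℝ (deriv f w)).concaveOn hf.1)
  have hmin := isMinOn_sub_deriv_mul hf.convexOn hw hd
  exact hstrict.eq_of_isMinOn (fun y hy ↦ heq.le.trans (hmin hy)) hmin hv (interior_subset hw)

theorem ae_deriv_eq_zero_of_eq_zero (g : ℝ → ℝ) : ∀ᵐ t, g t = 0 → deriv g t = 0 := by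
  have hisolated :=
    (countable_setOfPred_isolated_right_within (s := {t | g t = 0})).ae_notMem volume
  filter_upwards [hisolated] with t ht hgt
  by_contra hne
  have hzeros : ∀ᶠ z in 𝓝[>] t, g z ≠ 0 :=
    ((differentiableAt_of_deriv_ne_zero hne).hasDerivAt.eventually_ne hne).filter_mono
      (nhdsWithin_mono _ fun _ hz ↦ ne_of_gt hz)
  refine ht ⟨hgt, ?_⟩
  rw [← empty_mem_iff_bot, inter_comm, nhdsWithin_inter', mem_inf_principal]
  filter_upwards [hzeros] with z hz hgz using hz hgz

theorem strictMono_deriv_of_strictConvexOn_univ (hf : StrictConvexOn ℝ univ f)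
    (hd : Differentiable ℝ f) : StrictMono (deriv f) :=
  strictMonoOn_univ.1 (hf.strictMonoOn_deriv fun x _ ↦ hd x)

/-- Both sides say `vm = vp = w`. -/
theorem sub_deriv_mul_eq_iff_deriv_eq (hf : StrictConvexOn ℝ univ f) (hd : Differentiable ℝ f)
    {vm vp : ℝ} (h : f vp - deriv f w * vp = f vm - deriv f w * vm) :
    f w - deriv f w * w = f vp - deriv f w * vp ↔
      deriv f vm = deriv f w ∧ deriv f vm = deriv f vp := by
  have hiff (v : ℝ) : f v - deriv f w * v = f w - deriv f w * w ↔ v = w :=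
    sub_deriv_mul_eq_iff hf (by simp) (mem_univ v) (hd w)
  refine ⟨fun heq ↦ ?_, fun ⟨hm, hp⟩ ↦ ?_⟩
  · rw [(hiff vm).1 (h.symm.trans heq.symm), (hiff vp).1 heq.symm]
    exact ⟨rfl, rfl⟩
  · rw [(strictMono_deriv_of_strictConvexOn_univ hf hd).injective (hp.symm.trans hm)]

theorem exists_forall_abs_le_of_continuous (hf : Continuous f) (M : ℝ) :
    ∃ C, ∀ v, |v| ≤ M → |f v| ≤ C := by
  obtain ⟨C, hC⟩ := (isCompact_Icc (a := -M) (b := M)).exists_bound_of_continuousOn hf.continuousOn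
  exact ⟨C, fun v hv ↦ hC v (abs_le.1 hv)⟩

end Calculus

section TestFunctions

variable {E : Type*} [NormedAddCommGroup E] [NormedSpace ℝ E] [FiniteDimensional ℝ E]
  [MeasurableSpace E] [BorelSpace E] {μ : Measure E} [μ.IsAddHaarMeasure]

theorem ae_nonneg_of_forall_contDiff_integral_nonneg {U : Set E} (hU : IsOpen U) {D : E → ℝ}
    (hD : LocallyIntegrable D μ)
    (h : ∀ ψ : E → ℝ, ContDiff ℝ ∞ ψ → HasCompactSupport ψ → (∀ x, 0 ≤ ψ x) →
      Function.support ψ ⊆ U → 0 ≤ ∫ x, ψ x * D x ∂μ) :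
    ∀ᵐ x ∂μ, x ∈ U → 0 ≤ D x := by
  let φ (n : ℕ) : ContDiffBump (0 : E) :=
    ⟨1 / ((n : ℝ) + 1), 2 * (1 / ((n : ℝ) + 1)), by positivity,
      lt_two_mul_self (by positivity)⟩
  have hφ : Tendsto (fun n ↦ (φ n).rOut) atTop (𝓝 0) := by
    simpa only [mul_zero] using (tendsto_one_div_add_atTop_nhds_zero_nat (𝕜 := ℝ)).const_mul 2
  filter_upwards [ContDiffBump.ae_convolution_tendsto_right_of_locallyIntegrable (K := 2) hφ
    (Eventually.of_forall fun _ ↦ le_rfl) hD] with x hx hxU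
  obtain ⟨r, hr, hball⟩ := Metric.isOpen_iff.1 hU x hxU
  refine ge_of_tendsto hx ?_
  filter_upwards [hφ.eventually (gt_mem_nhds hr)] with n hn
  rw [convolution_lsmul_swap]
  refine h (fun y ↦ (φ n).normed μ (x - y)) ((φ n).contDiff_normed.comp (by fun_prop))
    ((φ n).hasCompactSupport_normed.comp_homeomorph (Homeomorph.subLeft x))
    (fun y ↦ (φ n).nonneg_normed _) fun y hy ↦ hball ?_
  have hy' : x - y ∈ Metric.ball (0 : E) (φ n).rOut := by
    rw [← (φ n).support_normed_eq (μ := μ)]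
    exact hy
  rw [mem_ball_zero_iff] at hy'
  rw [Metric.mem_ball, dist_comm, dist_eq_norm]
  exact hy'.trans hn

end TestFunctions

/-! ### Steklov means of Lipschitz curves -/

/-- The Steklov mean `h⁻¹ ∫_t^{t+h} α` of `α`, the `C¹` regularisation used to test weak
inequalities along a curve that is only Lipschitz. -/
def steklovMean (h : ℝ) (α : ℝ → ℝ) (t : ℝ) : ℝ :=
  ⨍ s in t..(t + h), α s

section SteklovMean

variable {α : ℝ → ℝ} {K : ℝ≥0} {h : ℝ}

theorem hasDerivAt_steklovMean (hα : Continuous α) (h t : ℝ) :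
    HasDerivAt (steklovMean h α) (h⁻¹ * (α (t + h) - α t)) t := by
  have hprim (t : ℝ) : HasDerivAt (fun t ↦ ∫ s in (0 : ℝ)..t, α s) (α t) t :=
    intervalIntegral.integral_hasDerivAt_right (hα.intervalIntegrable _ _)
      hα.aestronglyMeasurable.stronglyMeasurableAtFilter hα.continuousAt
  have hmean : steklovMean h α =
      fun t ↦ h⁻¹ * ((∫ s in (0 : ℝ)..(t + h), α s) - ∫ s in (0 : ℝ)..t, α s) := by
    funext t
    rw [steklovMean, interval_average_eq, add_sub_cancel_left, smul_eq_mul,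
      intervalIntegral.integral_interval_sub_left (hα.intervalIntegrable _ _)
        (hα.intervalIntegrable _ _)]
  rw [hmean]
  exact (((hprim (t + h)).comp_add_const t h).sub (hprim t)).const_mul _

theorem contDiff_steklovMean (hα : Continuous α) (h : ℝ) : ContDiff ℝ 1 (steklovMean h α) := by
  rw [contDiff_one_iff_deriv, funext fun t ↦ (hasDerivAt_steklovMean hα h t).deriv]
  exact ⟨fun t ↦ (hasDerivAt_steklovMean hα h t).differentiableAt, by fun_prop⟩

theorem abs_steklovMean_sub_le (hα : LipschitzWith K α) (hh : 0 < h) (t : ℝ) :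
    |steklovMean h α t - α t| ≤ K * h := by
  obtain ⟨c, hc, hmean⟩ := exists_eq_interval_average (lt_add_of_pos_right t hh).ne
    hα.continuous.continuousOn
  rw [uIoo_of_lt (lt_add_of_pos_right t hh)] at hc
  rw [steklovMean, ← hmean]
  refine (hα.dist_le_mul c t).trans (mul_le_mul_of_nonneg_left ?_ K.2)
  rw [Real.dist_eq, abs_of_pos (sub_pos.2 hc.1)]
  linarith [hc.2]

theorem abs_deriv_steklovMean_le (hα : LipschitzWith K α) (hh : 0 < h) (t : ℝ) :
    |deriv (steklovMean h α) t| ≤ K := by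
  rw [(hasDerivAt_steklovMean hα.continuous h t).deriv, abs_mul, abs_of_pos (inv_pos.2 hh),
    inv_mul_le_iff₀ hh, mul_comm]
  simpa [Real.dist_eq, abs_of_pos hh] using hα.dist_le_mul (t + h) t

/-- Smoothing at the time scale `ε²` displaces the curve by `o(ε)` only, which a test function of
width `ε` does not see. -/
theorem tendsto_steklovMean_sq_sub_div (hα : LipschitzWith K α) (t : ℝ) :
    Tendsto (fun ε ↦ (steklovMean (ε ^ 2) α t - α t) / ε) (𝓝[>] 0) (𝓝 0) := by
  have hlin : Tendsto (fun ε : ℝ ↦ K * ε) (𝓝[>] 0) (𝓝 0) :=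
    ((continuous_const_mul (K : ℝ)).tendsto' 0 0 (mul_zero _)).mono_left nhdsWithin_le_nhds
  refine squeeze_zero_norm' ?_ hlin
  filter_upwards [self_mem_nhdsWithin] with ε hε
  rw [norm_div, Real.norm_of_nonneg (le_of_lt hε), div_le_iff₀ hε, mul_assoc, ← sq]
  exact abs_steklovMean_sub_le hα (pow_pos hε 2) t

theorem tendsto_deriv_steklovMean (hα : Continuous α) {t : ℝ} (hd : DifferentiableAt ℝ α t) :
    Tendsto (fun h ↦ deriv (steklovMean h α) t) (𝓝[≠] 0) (𝓝 (deriv α t)) := by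
  simpa only [(hasDerivAt_steklovMean hα _ t).deriv, smul_eq_mul] using
    hasDerivAt_iff_tendsto_slope_zero.1 hd.hasDerivAt

end SteklovMean

/-! ### One-sided approximate identities -/

/-- The mean `∫ V(b + εy) k(y) dy` of `V` against the kernel `k` rescaled to the length scale `ε`
around `b`; as `ε → 0` it sees only the one-sided limits of `V` at `b`. -/
def rescaledMean (V : ℝ → ℝ) (b ε : ℝ) (k : ℝ → ℝ) : ℝ :=
  ∫ y, V (b + ε * y) * k y

section RescaledMean

variable {V k : ℝ → ℝ} {M b ε : ℝ}

theorem integral_mul_comp_sub_div (V k : ℝ → ℝ) (b : ℝ) (hε : 0 < ε) :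
    ∫ x, V x * k ((x - b) / ε) = ε * rescaledMean V b ε k := by
  have hscale := Measure.integral_comp_mul_left (fun y ↦ V (b + y) * k (y / ε)) ε
  have htranslate := integral_add_left_eq_self (μ := volume) (fun x ↦ V x * k ((x - b) / ε)) b
  simp only [add_sub_cancel_left] at htranslate
  simp only [mul_div_cancel_left₀ _ hε.ne'] at hscale
  rw [rescaledMean, hscale, htranslate, abs_of_pos (inv_pos.2 hε), smul_eq_mul,
    mul_inv_cancel_left₀ hε.ne']

theorem abs_rescaledMean_le (hk : Integrable k) (hM : ∀ x, |V x| ≤ M) (b ε : ℝ) :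
    |rescaledMean V b ε k| ≤ M * ∫ y, |k y| := by
  rw [← integral_const_mul, rescaledMean, ← Real.norm_eq_abs]
  refine norm_integral_le_of_norm_le (hk.abs.const_mul M) (Eventually.of_forall fun y ↦ ?_)
  rw [Real.norm_eq_abs, abs_mul]
  exact mul_le_mul_of_nonneg_right (hM _) (abs_nonneg _)

theorem measurable_rescaledMean {V : ℝ → ℝ → ℝ} (hV : Measurable (Function.uncurry V))
    {β : ℝ → ℝ} (hβ : Measurable β) (ε : ℝ) (hk : Measurable k) :
    Measurable fun t ↦ rescaledMean (V · t) (β t) ε k := by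
  have hVβ : Measurable fun p : ℝ × ℝ ↦ V (β p.1 + ε * p.2) p.1 :=
    hV.comp (g := Function.uncurry V) (f := fun p : ℝ × ℝ ↦ (β p.1 + ε * p.2, p.1)) (by fun_prop)
  exact (hVβ.mul (hk.comp measurable_snd)).stronglyMeasurable.integral_prod_right.measurable

theorem tendsto_add_mul_nhdsWithin {b ε : ℕ → ℝ} {a y : ℝ} (hε : ∀ n, 0 < ε n)
    (hε0 : Tendsto ε atTop (𝓝 0)) (hb : Tendsto (fun n ↦ (b n - a) / ε n) atTop (𝓝 0)) {s : Set ℝ}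
    (hs : ∀ᶠ z in 𝓝 y, ∀ n, a + ε n * z ∈ s) :
    Tendsto (fun n ↦ b n + ε n * y) atTop (𝓝[s] a) := by
  have hform (n : ℕ) : b n + ε n * y = a + ε n * ((b n - a) / ε n + y) := by
    have := (hε n).ne'
    field_simp
    ring
  have hz : Tendsto (fun n ↦ (b n - a) / ε n + y) atTop (𝓝 y) := by
    simpa using hb.add_const y
  simp only [hform]
  refine tendsto_nhdsWithin_iff.2 ⟨by simpa using (hε0.mul hz).const_add a, ?_⟩
  filter_upwards [hz.eventually hs] with n hn using hn n

theorem tendsto_rescaledMean (hk : Integrable k) (hV : Measurable V) (hM : ∀ x, |V x| ≤ M)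
    {a Vm Vp : ℝ} (hVm : Tendsto V (𝓝[<] a) (𝓝 Vm)) (hVp : Tendsto V (𝓝[>] a) (𝓝 Vp))
    {b ε : ℕ → ℝ} (hε : ∀ n, 0 < ε n) (hε0 : Tendsto ε atTop (𝓝 0))
    (hb : Tendsto (fun n ↦ (b n - a) / ε n) atTop (𝓝 0)) :
    Tendsto (fun n ↦ rescaledMean V (b n) (ε n) k) atTop
      (𝓝 (Vm * (∫ y in Iic 0, k y) + Vp * ∫ y in Ioi 0, k y)) := by
  have hlim : Vm * (∫ y in Iic 0, k y) + Vp * ∫ y in Ioi 0, k y =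
      ∫ y, (if y ≤ 0 then Vm else Vp) * k y := by
    have hpiecewise : (fun y ↦ (if y ≤ 0 then Vm else Vp) * k y) =
        (Iic 0).piecewise (fun y ↦ Vm * k y) (fun y ↦ Vp * k y) := by
      funext y
      rw [ite_mul]
      rfl
    rw [hpiecewise, integral_piecewise measurableSet_Iic (hk.const_mul _).integrableOn
      (hk.const_mul _).integrableOn, compl_Iic, integral_const_mul, integral_const_mul]
  rw [hlim]
  refine tendsto_integral_of_dominated_convergence (fun y ↦ M * |k y|)
    (fun n ↦ ?_) (hk.abs.const_mul M) (fun n ↦ Eventually.of_forall fun y ↦ ?_) ?_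
  · exact (hV.comp (by fun_prop)).aestronglyMeasurable.mul hk.aestronglyMeasurable
  · rw [Real.norm_eq_abs, abs_mul]
    exact mul_le_mul_of_nonneg_right (hM _) (abs_nonneg _)
  · filter_upwards [volume.ae_ne (0 : ℝ)] with y hy
    refine Tendsto.mul_const _ ?_
    rcases hy.lt_or_gt with hy | hy
    · rw [if_pos hy.le]
      refine hVm.comp (tendsto_add_mul_nhdsWithin hε hε0 hb ?_)
      filter_upwards [gt_mem_nhds hy] with z hz n
      exact add_lt_of_neg_right a (mul_neg_of_pos_of_neg (hε n) hz)
    · rw [if_neg hy.not_ge]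
      refine hVp.comp (tendsto_add_mul_nhdsWithin hε hε0 hb ?_)
      filter_upwards [lt_mem_nhds hy] with z hz n
      exact lt_add_of_pos_right a (mul_pos (hε n) hz)

end RescaledMean

/-! ### Dissipative pairs along Lipschitz curves -/

/-- The left trace of `V` along the curve `x = α t`: `W t` is the limit of `V (·, t)` at `α t` from
the left, for every `t > 0`. -/
def HasLeftTrace (V : ℝ → ℝ → ℝ) (α W : ℝ → ℝ) : Prop :=
  ∀ t, 0 < t → Tendsto (V · t) (𝓝[<] α t) (𝓝 (W t))

/-- The right trace of `V` along the curve `x = α t`: `W t` is the limit of `V (·, t)` at `α t` from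
the right, for every `t > 0`. -/
def HasRightTrace (V : ℝ → ℝ → ℝ) (α W : ℝ → ℝ) : Prop :=
  ∀ t, 0 < t → Tendsto (V · t) (𝓝[>] α t) (𝓝 (W t))

/-- The flux density through the moving curve `x = α t` of a field with density `u` and flux `q` on
the curve. -/
def curveFlux (α u q : ℝ → ℝ) (t : ℝ) : ℝ :=
  q t - deriv α t * u t

/-- Bounded measurable fields with `∂_t U + ∂_x Q ≤ 0` in the sense of distributions on `t > 0`:
conservation laws and entropy inequalities in one format. -/
structure IsDissipativePair (U Q : ℝ → ℝ → ℝ) : Prop where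
  measurable_density : Measurable (Function.uncurry U)
  measurable_flux : Measurable (Function.uncurry Q)
  bounded : ∃ M, ∀ x t, |U x t| ≤ M ∧ |Q x t| ≤ M
  integral_nonneg : ∀ φ : ℝ → ℝ → ℝ,
    ContDiff ℝ 1 (fun p : ℝ × ℝ ↦ φ p.1 p.2) →
    HasCompactSupport (fun p : ℝ × ℝ ↦ φ p.1 p.2) →
    (∀ x t, 0 ≤ φ x t) →
    (∀ x t, t ≤ 0 → φ x t = 0) →
    0 ≤ ∫ p : ℝ × ℝ, (U p.1 p.2 * deriv (fun s ↦ φ p.1 s) p.2 +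
      Q p.1 p.2 * deriv (fun y ↦ φ y p.2) p.1)

section Trace

variable {V : ℝ → ℝ → ℝ} {α W u q : ℝ → ℝ} {K : ℝ≥0} {M c : ℝ}

theorem HasLeftTrace.neg (h : HasLeftTrace V α W) :
    HasLeftTrace (fun x t ↦ -V x t) α fun t ↦ -W t :=
  fun t ht ↦ (h t ht).neg

theorem HasRightTrace.neg (h : HasRightTrace V α W) :
    HasRightTrace (fun x t ↦ -V x t) α fun t ↦ -W t :=
  fun t ht ↦ (h t ht).neg

theorem HasLeftTrace.tendsto_shift (h : HasLeftTrace V α W) :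
    ∀ t, 0 < t → Tendsto (fun n : ℕ ↦ V (α t + 1 / ((n : ℝ) + 1) * (-1)) t) atTop (𝓝 (W t)) :=
  fun t ht ↦ (h t ht).comp <| tendsto_add_mul_nhdsWithin (fun _ ↦ Nat.one_div_pos_of_nat)
    tendsto_one_div_add_atTop_nhds_zero_nat (by simp) <| by
      filter_upwards [gt_mem_nhds neg_one_lt_zero] with z hz n
      exact add_lt_of_neg_right _ (mul_neg_of_pos_of_neg Nat.one_div_pos_of_nat hz)

theorem HasRightTrace.tendsto_shift (h : HasRightTrace V α W) :
    ∀ t, 0 < t → Tendsto (fun n : ℕ ↦ V (α t + 1 / ((n : ℝ) + 1) * 1) t) atTop (𝓝 (W t)) :=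
  fun t ht ↦ (h t ht).comp <| tendsto_add_mul_nhdsWithin (fun _ ↦ Nat.one_div_pos_of_nat)
    tendsto_one_div_add_atTop_nhds_zero_nat (by simp) <| by
      filter_upwards [lt_mem_nhds one_pos] with z hz n
      exact lt_add_of_pos_right _ (mul_pos Nat.one_div_pos_of_nat hz)

theorem aestronglyMeasurable_of_tendsto_shift (hV : Measurable (Function.uncurry V))
    (hα : Measurable α)
    (h : ∀ t, 0 < t → Tendsto (fun n : ℕ ↦ V (α t + 1 / ((n : ℝ) + 1) * c) t) atTop (𝓝 (W t))) :
    AEStronglyMeasurable W (volume.restrict (Ioi 0)) := by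
  refine aestronglyMeasurable_of_tendsto_ae (u := atTop)
    (f := fun (n : ℕ) t ↦ V (α t + 1 / ((n : ℝ) + 1) * c) t) (fun n ↦ ?_)
    ((ae_restrict_iff' measurableSet_Ioi).2 (Eventually.of_forall h))
  exact (hV.comp ((hα.add_const _).prodMk measurable_id)).aestronglyMeasurable

theorem HasLeftTrace.aestronglyMeasurable (h : HasLeftTrace V α W)
    (hV : Measurable (Function.uncurry V)) (hα : Measurable α) :
    AEStronglyMeasurable W (volume.restrict (Ioi 0)) :=
  aestronglyMeasurable_of_tendsto_shift hV hα h.tendsto_shift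

theorem HasRightTrace.aestronglyMeasurable (h : HasRightTrace V α W)
    (hV : Measurable (Function.uncurry V)) (hα : Measurable α) :
    AEStronglyMeasurable W (volume.restrict (Ioi 0)) :=
  aestronglyMeasurable_of_tendsto_shift hV hα h.tendsto_shift

theorem HasLeftTrace.abs_le (h : HasLeftTrace V α W) (hM : ∀ x t, |V x t| ≤ M) {t : ℝ}
    (ht : 0 < t) : |W t| ≤ M :=
  le_of_tendsto' (h t ht).abs fun _ ↦ hM _ _

theorem HasRightTrace.abs_le (h : HasRightTrace V α W) (hM : ∀ x t, |V x t| ≤ M) {t : ℝ}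
    (ht : 0 < t) : |W t| ≤ M :=
  le_of_tendsto' (h t ht).abs fun _ ↦ hM _ _

theorem locallyIntegrable_indicator_curveFlux (hα : LipschitzWith K α)
    (hu : AEStronglyMeasurable u (volume.restrict (Ioi 0)))
    (hq : AEStronglyMeasurable q (volume.restrict (Ioi 0)))
    (huM : ∀ t, 0 < t → |u t| ≤ M) (hqM : ∀ t, 0 < t → |q t| ≤ M) :
    LocallyIntegrable ((Ioi 0).indicator (curveFlux α u q)) := by
  have hbound {t : ℝ} (ht : 0 < t) : |curveFlux α u q t| ≤ M + K * M := by
    refine (abs_sub _ _).trans (add_le_add (hqM t ht) ?_)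
    rw [abs_mul]
    exact mul_le_mul (norm_deriv_le_of_lipschitz hα) (huM t ht) (abs_nonneg _) K.2
  refine (locallyIntegrable_const (M + K * M)).mono
    ((aestronglyMeasurable_indicator_iff measurableSet_Ioi).2
      (hq.sub ((measurable_deriv α).aestronglyMeasurable.mul hu))) (Eventually.of_forall fun t ↦ ?_)
  rcases le_or_gt t 0 with ht | ht
  · simp [ht]
  · rw [indicator_of_mem (mem_Ioi.2 ht)]
    exact (hbound ht).trans (le_abs_self _)

end Trace

section MovingFrame

variable {β g k : ℝ → ℝ} {ε : ℝ}

theorem hasCompactSupport_mul_comp_sub_div (hg : HasCompactSupport g) (hk : HasCompactSupport k)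
    (hβ : Continuous β) (hε : ε ≠ 0) :
    HasCompactSupport fun p : ℝ × ℝ ↦ g p.2 * k ((p.1 - β p.2) / ε) := by
  refine HasCompactSupport.intro
    ((hg.isCompact.prod hk.isCompact).image
      (f := fun q : ℝ × ℝ ↦ (β q.1 + ε * q.2, q.1)) (by fun_prop)) fun p hp ↦ ?_
  by_contra hne
  refine hp ⟨(p.2, (p.1 - β p.2) / ε), ⟨subset_tsupport _ (left_ne_zero_of_mul hne),
    subset_tsupport _ (right_ne_zero_of_mul hne)⟩, ?_⟩
  ext
  · simp only [mul_div_cancel₀ _ hε, add_sub_cancel]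
  · rfl

theorem integrable_mul_mul_comp_sub_div (hg : Continuous g) (hgc : HasCompactSupport g)
    (hk : Continuous k) (hkc : HasCompactSupport k) (hβ : Continuous β) (hε : ε ≠ 0)
    {V : ℝ → ℝ → ℝ} {M : ℝ} (hV : Measurable (Function.uncurry V)) (hM : ∀ x t, |V x t| ≤ M) :
    Integrable fun p : ℝ × ℝ ↦ V p.1 p.2 * (g p.2 * k ((p.1 - β p.2) / ε)) :=
  (Continuous.integrable_of_hasCompactSupport (by fun_prop)
    (hasCompactSupport_mul_comp_sub_div hgc hkc hβ hε)).bdd_mul hV.aestronglyMeasurable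
    (Eventually.of_forall fun p ↦ hM p.1 p.2)

theorem integral_slice_mul_mul_comp_sub_div (hε : 0 < ε) (V : ℝ → ℝ → ℝ) (t : ℝ) :
    ∫ x, V x t * (g t * k ((x - β t) / ε)) = g t * (ε * rescaledMean (V · t) (β t) ε k) := by
  simp only [← integral_mul_comp_sub_div _ _ _ hε, ← integral_const_mul, mul_left_comm]

theorem integral_mul_mul_comp_sub_div (hε : 0 < ε) {V : ℝ → ℝ → ℝ}
    (hint : Integrable fun p : ℝ × ℝ ↦ V p.1 p.2 * (g p.2 * k ((p.1 - β p.2) / ε))) :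
    ∫ p : ℝ × ℝ, V p.1 p.2 * (g p.2 * k ((p.1 - β p.2) / ε)) =
      ∫ t, g t * (ε * rescaledMean (V · t) (β t) ε k) := by
  rw [Measure.volume_eq_prod] at hint ⊢
  simp only [integral_prod_symm _ hint, integral_slice_mul_mul_comp_sub_div hε]

theorem integrable_mul_rescaledMean (hε : 0 < ε) {V : ℝ → ℝ → ℝ}
    (hint : Integrable fun p : ℝ × ℝ ↦ V p.1 p.2 * (g p.2 * k ((p.1 - β p.2) / ε))) :
    Integrable fun t ↦ g t * (ε * rescaledMean (V · t) (β t) ε k) := by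
  simpa only [Function.comp_apply, Prod.fst_swap, Prod.snd_swap,
    integral_slice_mul_mul_comp_sub_div hε] using hint.swap.integral_prod_left

end MovingFrame

section CurveTest

variable {U Q : ℝ → ℝ → ℝ} {ψ χ β : ℝ → ℝ} {ε : ℝ}

theorem hasDerivAt_mul_comp_sub_div_time {t : ℝ} (hψ : DifferentiableAt ℝ ψ t)
    (hχ : Differentiable ℝ χ) (hβ : DifferentiableAt ℝ β t) (x ε : ℝ) :
    HasDerivAt (fun s ↦ ψ s * χ ((x - β s) / ε))
      (deriv ψ t * χ ((x - β t) / ε) - ψ t * deriv β t / ε * deriv χ ((x - β t) / ε)) t := by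
  have hinner : HasDerivAt (fun s ↦ (x - β s) / ε) (-deriv β t / ε) t :=
    (hβ.hasDerivAt.const_sub x).div_const ε
  refine (hψ.hasDerivAt.mul ((hχ _).hasDerivAt.comp t hinner)).congr_deriv ?_
  simp only [Function.comp_apply]
  ring

theorem hasDerivAt_mul_comp_sub_div_space {x b : ℝ} (hχ : Differentiable ℝ χ) (c ε : ℝ) :
    HasDerivAt (fun y ↦ c * χ ((y - b) / ε)) (c / ε * deriv χ ((x - b) / ε)) x := by
  have hinner : HasDerivAt (fun y ↦ (y - b) / ε) (1 / ε) x :=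
    ((hasDerivAt_id x).sub_const b).div_const ε
  exact (((hχ _).hasDerivAt.comp x hinner).const_mul c).congr_deriv (by ring)

theorem integral_distribDeriv_mul_comp_sub_div (hU : Measurable (Function.uncurry U))
    (hQ : Measurable (Function.uncurry Q)) {M : ℝ} (hM : ∀ x t, |U x t| ≤ M ∧ |Q x t| ≤ M)
    (hψ : ContDiff ℝ 1 ψ) (hψc : HasCompactSupport ψ) (hχ : ContDiff ℝ 1 χ)
    (hχc : HasCompactSupport χ) (hβ : ContDiff ℝ 1 β) (hε : 0 < ε) :
    (∫ p : ℝ × ℝ, (U p.1 p.2 * deriv (fun s ↦ ψ s * χ ((p.1 - β s) / ε)) p.2 +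
        Q p.1 p.2 * deriv (fun y ↦ ψ p.2 * χ ((y - β p.2) / ε)) p.1)) =
      (∫ t, deriv ψ t * (ε * rescaledMean (U · t) (β t) ε χ)) +
        ∫ t, ψ t * curveFlux β (fun t ↦ rescaledMean (U · t) (β t) ε (deriv χ))
          (fun t ↦ rescaledMean (Q · t) (β t) ε (deriv χ)) t := by
  have hψ' : Continuous (deriv ψ) := hψ.continuous_deriv le_rfl
  have hχ' : Continuous (deriv χ) := hχ.continuous_deriv le_rfl
  have hψε : HasCompactSupport fun t ↦ ψ t / ε := hψc.mul_right (f' := fun _ ↦ ε⁻¹)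
  have hψβ : HasCompactSupport fun t ↦ ψ t / ε * deriv β t := hψε.mul_right
  have hmass := integrable_mul_mul_comp_sub_div hψ' hψc.deriv hχ.continuous hχc hβ.continuous
    hε.ne' hU fun x t ↦ (hM x t).1
  have hflux := integrable_mul_mul_comp_sub_div (by fun_prop) hψε hχ' hχc.deriv hβ.continuous
    hε.ne' hQ fun x t ↦ (hM x t).2
  have hdrift := integrable_mul_mul_comp_sub_div (g := fun t ↦ ψ t / ε * deriv β t)
    ((hψ.continuous.div_const ε).mul (hβ.continuous_deriv le_rfl)) hψβ hχ' hχc.deriv hβ.continuous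
    hε.ne' hU fun x t ↦ (hM x t).1
  have hsplit (p : ℝ × ℝ) :
      U p.1 p.2 * deriv (fun s ↦ ψ s * χ ((p.1 - β s) / ε)) p.2 +
          Q p.1 p.2 * deriv (fun y ↦ ψ p.2 * χ ((y - β p.2) / ε)) p.1 =
        U p.1 p.2 * (deriv ψ p.2 * χ ((p.1 - β p.2) / ε)) +
          (Q p.1 p.2 * (ψ p.2 / ε * deriv χ ((p.1 - β p.2) / ε)) -
            U p.1 p.2 * (ψ p.2 / ε * deriv β p.2 * deriv χ ((p.1 - β p.2) / ε))) := by
    rw [(hasDerivAt_mul_comp_sub_div_time (hψ.differentiable one_ne_zero _)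
        (hχ.differentiable one_ne_zero) (hβ.differentiable one_ne_zero _) _ ε).deriv,
      (hasDerivAt_mul_comp_sub_div_space (hχ.differentiable one_ne_zero) _ ε).deriv]
    ring
  simp only [hsplit]
  rw [integral_add hmass, integral_sub hflux hdrift, integral_mul_mul_comp_sub_div hε hmass,
    integral_mul_mul_comp_sub_div (g := fun t ↦ ψ t / ε) hε hflux,
    integral_mul_mul_comp_sub_div (g := fun t ↦ ψ t / ε * deriv β t) hε hdrift,
    ← integral_sub (integrable_mul_rescaledMean (g := fun t ↦ ψ t / ε) hε hflux)
      (integrable_mul_rescaledMean (g := fun t ↦ ψ t / ε * deriv β t) hε hdrift)]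
  · congr! 3 with t
    rw [curveFlux]
    field_simp
  · exact hflux.sub hdrift

theorem IsDissipativePair.neg_integral_le_integral_mul_curveFlux (h : IsDissipativePair U Q)
    (hψ : ContDiff ℝ 1 ψ) (hψc : HasCompactSupport ψ) (hψ0 : ∀ t, 0 ≤ ψ t)
    (hψz : ∀ t, t ≤ 0 → ψ t = 0) (hχ : ContDiff ℝ 1 χ) (hχc : HasCompactSupport χ)
    (hχ0 : ∀ y, 0 ≤ χ y) (hβ : ContDiff ℝ 1 β) (hε : 0 < ε) :
    -∫ t, deriv ψ t * (ε * rescaledMean (U · t) (β t) ε χ) ≤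
      ∫ t, ψ t * curveFlux β (fun t ↦ rescaledMean (U · t) (β t) ε (deriv χ))
        (fun t ↦ rescaledMean (Q · t) (β t) ε (deriv χ)) t := by
  obtain ⟨M, hM⟩ := h.bounded
  rw [neg_le_iff_add_nonneg', ← integral_distribDeriv_mul_comp_sub_div h.measurable_density
    h.measurable_flux hM hψ hψc hχ hχc hβ hε]
  exact h.integral_nonneg (fun x t ↦ ψ t * χ ((x - β t) / ε)) (by fun_prop)
    (hasCompactSupport_mul_comp_sub_div hψc hχc hβ.continuous hε.ne')
    (fun x t ↦ mul_nonneg (hψ0 _) (hχ0 _)) fun x t ht ↦ by rw [hψz t ht, zero_mul]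

theorem abs_integral_mul_rescaledMean_le {V : ℝ → ℝ → ℝ} {g k : ℝ → ℝ} {M : ℝ} (hg : Integrable g)
    (hk : Integrable k) (hM : ∀ x t, |V x t| ≤ M) (β : ℝ → ℝ) (hε : 0 ≤ ε) :
    |∫ t, g t * (ε * rescaledMean (V · t) (β t) ε k)| ≤
      ε * ((M * ∫ y, |k y|) * ∫ t, |g t|) := by
  rw [← mul_assoc, ← integral_const_mul, ← Real.norm_eq_abs]
  refine norm_integral_le_of_norm_le (hg.abs.const_mul _) (Eventually.of_forall fun t ↦ ?_)
  rw [Real.norm_eq_abs, abs_mul, abs_mul, abs_of_nonneg hε, mul_comm]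
  exact mul_le_mul_of_nonneg_right
    (mul_le_mul_of_nonneg_left (abs_rescaledMean_le hk (hM · t) _ _) hε) (abs_nonneg _)

theorem tendsto_rescaledMean_deriv (hχ : ContDiff ℝ 1 χ) (hχc : HasCompactSupport χ)
    (hχ1 : χ 0 = 1) {V : ℝ → ℝ} {M : ℝ} (hV : Measurable V) (hM : ∀ x, |V x| ≤ M)
    {a Vm Vp : ℝ} (hVm : Tendsto V (𝓝[<] a) (𝓝 Vm)) (hVp : Tendsto V (𝓝[>] a) (𝓝 Vp))
    {b ε : ℕ → ℝ} (hε : ∀ n, 0 < ε n) (hε0 : Tendsto ε atTop (𝓝 0))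
    (hb : Tendsto (fun n ↦ (b n - a) / ε n) atTop (𝓝 0)) :
    Tendsto (fun n ↦ rescaledMean V (b n) (ε n) (deriv χ)) atTop (𝓝 (Vm - Vp)) := by
  have hχ' : Integrable (deriv χ) :=
    (hχ.continuous_deriv le_rfl).integrable_of_hasCompactSupport hχc.deriv
  have hlim := tendsto_rescaledMean hχ' hV hM hVm hVp hε hε0 hb
  rwa [hχc.integral_Iic_deriv_eq hχ, hχc.integral_Ioi_deriv_eq hχ, hχ1, mul_one, mul_neg_one,
    ← sub_eq_add_neg] at hlim

variable {α Um Up Qm Qp : ℝ → ℝ} {K : ℝ≥0}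

theorem tendsto_curveFlux_rescaledMean (h : IsDissipativePair U Q) (hχ : ContDiff ℝ 1 χ)
    (hχc : HasCompactSupport χ) (hχ1 : χ 0 = 1) (hα : LipschitzWith K α)
    (hUm : HasLeftTrace U α Um) (hUp : HasRightTrace U α Up) (hQm : HasLeftTrace Q α Qm)
    (hQp : HasRightTrace Q α Qp) {ε : ℕ → ℝ} (hε : ∀ n, 0 < ε n) (hε0 : Tendsto ε atTop (𝓝 0))
    {t : ℝ} (ht : 0 < t) (hd : DifferentiableAt ℝ α t) :
    Tendsto (fun n ↦ curveFlux (steklovMean (ε n ^ 2) α)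
        (fun t ↦ rescaledMean (U · t) (steklovMean (ε n ^ 2) α t) (ε n) (deriv χ))
        (fun t ↦ rescaledMean (Q · t) (steklovMean (ε n ^ 2) α t) (ε n) (deriv χ)) t)
      atTop (𝓝 (curveFlux α Um Qm t - curveFlux α Up Qp t)) := by
  obtain ⟨M, hM⟩ := h.bounded
  have hε' : Tendsto ε atTop (𝓝[>] 0) :=
    tendsto_nhdsWithin_iff.2 ⟨hε0, Eventually.of_forall hε⟩
  have hεsq : Tendsto (fun n ↦ ε n ^ 2) atTop (𝓝[≠] 0) :=
    tendsto_nhdsWithin_iff.2 ⟨by simpa using hε0.pow 2,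
      Eventually.of_forall fun n ↦ (pow_pos (hε n) 2).ne'⟩
  have hcurve := (tendsto_steklovMean_sq_sub_div hα t).comp hε'
  have hspeed := (tendsto_deriv_steklovMean hα.continuous hd).comp hεsq
  have hU := tendsto_rescaledMean_deriv hχ hχc hχ1
    (h.measurable_density.comp measurable_prodMk_right) (fun x ↦ (hM x t).1) (hUm t ht) (hUp t ht)
    hε hε0 hcurve
  have hQ := tendsto_rescaledMean_deriv hχ hχc hχ1
    (h.measurable_flux.comp measurable_prodMk_right) (fun x ↦ (hM x t).2) (hQm t ht) (hQp t ht)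
    hε hε0 hcurve
  have hsplit : curveFlux α Um Qm t - curveFlux α Up Qp t =
      Qm t - Qp t - deriv α t * (Um t - Up t) := by
    simp only [curveFlux]
    ring
  rw [hsplit]
  exact hQ.sub (hspeed.mul hU)

theorem tendsto_integral_mul_curveFlux_rescaledMean (h : IsDissipativePair U Q)
    (hψ : Integrable ψ) (hψz : ∀ t, t ≤ 0 → ψ t = 0) (hχ : ContDiff ℝ 1 χ)
    (hχc : HasCompactSupport χ) (hχ1 : χ 0 = 1) (hα : LipschitzWith K α)
    (hUm : HasLeftTrace U α Um) (hUp : HasRightTrace U α Up) (hQm : HasLeftTrace Q α Qm)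
    (hQp : HasRightTrace Q α Qp) {ε : ℕ → ℝ} (hε : ∀ n, 0 < ε n) (hε0 : Tendsto ε atTop (𝓝 0)) :
    Tendsto (fun n ↦ ∫ t, ψ t * curveFlux (steklovMean (ε n ^ 2) α)
        (fun t ↦ rescaledMean (U · t) (steklovMean (ε n ^ 2) α t) (ε n) (deriv χ))
        (fun t ↦ rescaledMean (Q · t) (steklovMean (ε n ^ 2) α t) (ε n) (deriv χ)) t)
      atTop (𝓝 (∫ t, ψ t * (curveFlux α Um Qm t - curveFlux α Up Qp t))) := by
  obtain ⟨M, hM⟩ := h.bounded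
  have hχ' := hχ.continuous_deriv le_rfl
  have hχ'i : Integrable (deriv χ) := hχ'.integrable_of_hasCompactSupport hχc.deriv
  have hβ (n : ℕ) : Measurable (steklovMean (ε n ^ 2) α) :=
    (contDiff_steklovMean hα.continuous _).continuous.measurable
  refine tendsto_integral_of_dominated_convergence
    (fun t ↦ |ψ t| * (M * (∫ y, |deriv χ y|) + K * (M * ∫ y, |deriv χ y|)))
    (fun n ↦ ?_) (hψ.abs.mul_const _) (fun n ↦ Eventually.of_forall fun t ↦ ?_) ?_
  · exact hψ.aestronglyMeasurable.mul
      ((measurable_rescaledMean h.measurable_flux (hβ n) _ hχ'.measurable).sub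
        ((measurable_deriv _).mul (measurable_rescaledMean h.measurable_density (hβ n) _
          hχ'.measurable))).aestronglyMeasurable
  · rw [Real.norm_eq_abs, abs_mul]
    refine mul_le_mul_of_nonneg_left ((abs_sub _ _).trans (add_le_add
      (abs_rescaledMean_le hχ'i (fun x ↦ (hM x t).2) _ _) ?_)) (abs_nonneg _)
    rw [abs_mul]
    exact mul_le_mul (abs_deriv_steklovMean_le hα (pow_pos (hε n) 2) t)
      (abs_rescaledMean_le hχ'i (fun x ↦ (hM x t).1) _ _) (abs_nonneg _) K.2
  · filter_upwards [hα.ae_differentiableAt_real] with t hd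
    rcases le_or_gt t 0 with ht | ht
    · simp only [hψz t ht, zero_mul, tendsto_const_nhds]
    · exact (tendsto_curveFlux_rescaledMean h hχ hχc hχ1 hα hUm hUp hQm hQp hε hε0 ht
        hd).const_mul _

theorem IsDissipativePair.integral_mul_curveFlux_sub_nonneg (h : IsDissipativePair U Q)
    (hψ : ContDiff ℝ 1 ψ) (hψc : HasCompactSupport ψ) (hψ0 : ∀ t, 0 ≤ ψ t)
    (hψz : ∀ t, t ≤ 0 → ψ t = 0) (hα : LipschitzWith K α)
    (hUm : HasLeftTrace U α Um) (hUp : HasRightTrace U α Up) (hQm : HasLeftTrace Q α Qm)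
    (hQp : HasRightTrace Q α Qp) :
    0 ≤ ∫ t, ψ t * (curveFlux α Um Qm t - curveFlux α Up Qp t) := by
  obtain ⟨M, hM⟩ := h.bounded
  let χ : ContDiffBump (0 : ℝ) := ⟨1, 2, one_pos, one_lt_two⟩
  have hχ1 : χ 0 = 1 := χ.one_of_mem_closedBall (Metric.mem_closedBall_self χ.rIn_pos.le)
  let ε (n : ℕ) : ℝ := 1 / ((n : ℝ) + 1)
  have hε (n : ℕ) : 0 < ε n := Nat.one_div_pos_of_nat
  have hε0 : Tendsto ε atTop (𝓝 0) := tendsto_one_div_add_atTop_nhds_zero_nat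
  have hmass : Tendsto (fun n ↦ -∫ t, deriv ψ t *
      (ε n * rescaledMean (U · t) (steklovMean (ε n ^ 2) α t) (ε n) χ)) atTop (𝓝 0) := by
    refine squeeze_zero_norm (fun n ↦ ?_) (by
      simpa only [zero_mul] using hε0.mul_const ((M * ∫ y, |χ y|) * ∫ t, |deriv ψ t|))
    rw [norm_neg]
    exact abs_integral_mul_rescaledMean_le
      ((hψ.continuous_deriv le_rfl).integrable_of_hasCompactSupport hψc.deriv)
      (χ.continuous.integrable_of_hasCompactSupport χ.hasCompactSupport) (fun x t ↦ (hM x t).1)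
      _ (hε n).le
  exact le_of_tendsto_of_tendsto' hmass
    (tendsto_integral_mul_curveFlux_rescaledMean h
      (hψ.continuous.integrable_of_hasCompactSupport hψc) hψz χ.contDiff χ.hasCompactSupport hχ1
      hα hUm hUp hQm hQp hε hε0)
    fun n ↦ h.neg_integral_le_integral_mul_curveFlux hψ hψc hψ0 hψz χ.contDiff
      χ.hasCompactSupport (fun _ ↦ χ.nonneg) (contDiff_steklovMean hα.continuous _) (hε n)

theorem IsDissipativePair.curveFlux_le (h : IsDissipativePair U Q) (hα : LipschitzWith K α)
    (hUm : HasLeftTrace U α Um) (hUp : HasRightTrace U α Up) (hQm : HasLeftTrace Q α Qm)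
    (hQp : HasRightTrace Q α Qp) :
    ∀ᵐ t, 0 < t → curveFlux α Up Qp t ≤ curveFlux α Um Qm t := by
  obtain ⟨M, hM⟩ := h.bounded
  have hαm := hα.continuous.measurable
  have hUM (x t : ℝ) := (hM x t).1
  have hQM (x t : ℝ) := (hM x t).2
  have hleft := locallyIntegrable_indicator_curveFlux hα
    (hUm.aestronglyMeasurable h.measurable_density hαm)
    (hQm.aestronglyMeasurable h.measurable_flux hαm)
    (fun _ ↦ hUm.abs_le hUM) fun _ ↦ hQm.abs_le hQM
  have hright := locallyIntegrable_indicator_curveFlux hα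
    (hUp.aestronglyMeasurable h.measurable_density hαm)
    (hQp.aestronglyMeasurable h.measurable_flux hαm)
    (fun _ ↦ hUp.abs_le hUM) fun _ ↦ hQp.abs_le hQM
  suffices hjump : ∀ᵐ t, t ∈ Ioi 0 → 0 ≤ ((Ioi 0).indicator (curveFlux α Um Qm) -
      (Ioi 0).indicator (curveFlux α Up Qp)) t by
    filter_upwards [hjump] with t hle ht
    simpa only [Pi.sub_apply, indicator_of_mem (mem_Ioi.2 ht), sub_nonneg] using hle ht
  refine ae_nonneg_of_forall_contDiff_integral_nonneg isOpen_Ioi (hleft.sub hright)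
    fun ψ hψ hψc hψ0 hψU ↦ ?_
  have hψz (t : ℝ) (ht : t ≤ 0) : ψ t = 0 :=
    Function.notMem_support.1 fun hmem ↦ ht.not_gt (hψU hmem)
  refine (h.integral_mul_curveFlux_sub_nonneg (hψ.of_le (mod_cast le_top)) hψc hψ0 hψz hα hUm hUp
    hQm hQp).trans_eq (integral_congr_ae (Eventually.of_forall fun t ↦ ?_))
  rcases le_or_gt t 0 with ht | ht
  · simp only [hψz t ht, zero_mul]
  · simp only [Pi.sub_apply, indicator_of_mem (mem_Ioi.2 ht)]

theorem IsDissipativePair.curveFlux_eq (h : IsDissipativePair U Q)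
    (hneg : IsDissipativePair (fun x t ↦ -U x t) fun x t ↦ -Q x t)
    (hα : LipschitzWith K α) (hUm : HasLeftTrace U α Um) (hUp : HasRightTrace U α Up)
    (hQm : HasLeftTrace Q α Qm) (hQp : HasRightTrace Q α Qp) :
    ∀ᵐ t, 0 < t → curveFlux α Up Qp t = curveFlux α Um Qm t := by
  filter_upwards [h.curveFlux_le hα hUm hUp hQm hQp,
    hneg.curveFlux_le hα hUm.neg hUp.neg hQm.neg hQp.neg] with t hle hge ht
  refine (hle ht).antisymm ?_
  simpa only [curveFlux, mul_neg, sub_neg_eq_add, neg_add_eq_sub, ← neg_sub (_ * _),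
    neg_le_neg_iff] using hge ht

end CurveTest

/-! ### The discontinuous flux -/

/-- The discontinuous flux with the value `f_l` instead of `f_r` at the interface, as in the left
trace of `dflux`. -/
def dfluxLeft (fl fr : ℝ → ℝ) (x v : ℝ) : ℝ :=
  if x ≤ 0 then fl v else fr v

section DiscontinuousFlux

variable {fl fr : ℝ → ℝ} {V : ℝ → ℝ → ℝ} {α W : ℝ → ℝ}

theorem HasLeftTrace.dflux_comp (hl : Continuous fl) (hr : Continuous fr)
    (h : HasLeftTrace V α W) :
    HasLeftTrace (fun x t ↦ dflux fl fr x (V x t)) α fun t ↦ dfluxLeft fl fr (α t) (W t) := by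
  intro t ht
  rcases le_or_gt (α t) 0 with hneg | hpos
  · simp only [dfluxLeft, if_pos hneg]
    refine ((hl.tendsto _).comp (h t ht)).congr' ?_
    filter_upwards [self_mem_nhdsWithin] with y hy
    exact (if_pos (lt_of_lt_of_le hy hneg)).symm
  · simp only [dfluxLeft, if_neg hpos.not_ge]
    refine ((hr.tendsto _).comp (h t ht)).congr' ?_
    filter_upwards [nhdsWithin_le_nhds (lt_mem_nhds hpos)] with y hy
    exact (if_neg hy.not_gt).symm

theorem HasRightTrace.dflux_comp (hl : Continuous fl) (hr : Continuous fr)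
    (h : HasRightTrace V α W) :
    HasRightTrace (fun x t ↦ dflux fl fr x (V x t)) α fun t ↦ dflux fl fr (α t) (W t) := by
  intro t ht
  rcases lt_or_ge (α t) 0 with hneg | hpos
  · simp only [dflux, if_pos hneg]
    refine ((hl.tendsto _).comp (h t ht)).congr' ?_
    filter_upwards [nhdsWithin_le_nhds (gt_mem_nhds hneg)] with y hy
    exact (if_pos hy).symm
  · simp only [dflux, if_neg hpos.not_gt]
    refine ((hr.tendsto _).comp (h t ht)).congr' ?_
    filter_upwards [self_mem_nhdsWithin] with y hy
    exact (if_neg (hpos.trans (le_of_lt hy)).not_gt).symm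

theorem measurable_uncurry_dflux (hl : Measurable fl) (hr : Measurable fr)
    (hV : Measurable (Function.uncurry V)) :
    Measurable (Function.uncurry fun x t ↦ dflux fl fr x (V x t)) :=
  Measurable.ite (measurableSet_lt measurable_fst measurable_const) (hl.comp hV) (hr.comp hV)

theorem exists_forall_abs_dflux_le (hl : Continuous fl) (hr : Continuous fr) (M : ℝ) :
    ∃ C, ∀ x v, |v| ≤ M → |dflux fl fr x v| ≤ C := by
  obtain ⟨Cl, hCl⟩ := exists_forall_abs_le_of_continuous hl M
  obtain ⟨Cr, hCr⟩ := exists_forall_abs_le_of_continuous hr M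
  refine ⟨max Cl Cr, fun x v hv ↦ ?_⟩
  unfold dflux
  split_ifs
  · exact (hCl v hv).trans (le_max_left _ _)
  · exact (hCr v hv).trans (le_max_right _ _)

/-- The Kružkov entropy flux associated with the entropy `|v - k|`. -/
def kruzkovFlux (f : ℝ → ℝ) (k v : ℝ) : ℝ :=
  Real.sign (v - k) * (f v - f k)

theorem continuous_kruzkovFlux {f : ℝ → ℝ} (hf : Continuous f) (k : ℝ) :
    Continuous (kruzkovFlux f k) := by
  have hpiecewise : kruzkovFlux f k = fun v ↦ if v ≤ k then -(f v - f k) else f v - f k := by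
    funext v
    rcases lt_trichotomy v k with hv | rfl | hv
    · rw [kruzkovFlux, Real.sign_of_neg (sub_neg.2 hv), if_pos hv.le, neg_one_mul]
    · simp [kruzkovFlux]
    · rw [kruzkovFlux, Real.sign_of_pos (sub_pos.2 hv), if_neg hv.not_ge, one_mul]
  rw [hpiecewise]
  exact Continuous.if_le (by fun_prop) (by fun_prop) continuous_id continuous_const
    fun v hv ↦ by simp [hv]

/-- If the common flux were below `f_l(A) = f_r(B)`, the states would satisfy `vl > A` and `vr < B`,
and the interface would produce entropy. -/
theorem le_of_kruzkovFlux_le {A B vl vr : ℝ} (hl : ConvexOn ℝ univ fl) (hr : ConvexOn ℝ univ fr)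
    (hdl : DifferentiableAt ℝ fl A) (hdr : DifferentiableAt ℝ fr B) (hAB : fl A = fr B)
    (hA' : deriv fl A ≤ 0) (hB' : 0 ≤ deriv fr B) (heq : fr vr = fl vl)
    (hle : kruzkovFlux fr B vr ≤ kruzkovFlux fl A vl) : fl A ≤ fr vr := by
  by_contra! hlt
  have hA : A < vl := by
    by_contra! hv
    exact (heq ▸ hlt).not_ge (le_of_deriv_mul_sub_nonneg hl (by simp) (mem_univ _) hdl
      (mul_nonneg_of_nonpos_of_nonpos hA' (sub_nonpos.2 hv)))
  have hB : vr < B := by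
    by_contra! hv
    exact (hAB ▸ hlt).not_ge (le_of_deriv_mul_sub_nonneg hr (by simp) (mem_univ _) hdr
      (mul_nonneg hB' (sub_nonneg.2 hv)))
  rw [kruzkovFlux, kruzkovFlux, Real.sign_of_neg (sub_neg.2 hB), Real.sign_of_pos (sub_pos.2 hA)]
    at hle
  linarith

end DiscontinuousFlux

/-! ### Fluxes of `AB`-entropy solutions through Lipschitz curves -/

section Solution

variable {fl fr : ℝ → ℝ} {A B : ℝ} {u0 : ℝ → ℝ} {α : ℝ → ℝ} {K : ℝ≥0}

theorem ABSol.hasLeftTrace (sol : ABSol fl fr A B u0) (α : ℝ → ℝ) :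
    HasLeftTrace sol.u α fun t ↦ sol.um (α t) t :=
  fun t ht ↦ sol.um_spec (α t) t ht

theorem ABSol.hasRightTrace (sol : ABSol fl fr A B u0) (α : ℝ → ℝ) :
    HasRightTrace sol.u α fun t ↦ sol.up (α t) t :=
  fun t ht ↦ sol.up_spec (α t) t ht

theorem ABSol.isDissipativePair (hl : Continuous fl) (hr : Continuous fr)
    (sol : ABSol fl fr A B u0) :
    IsDissipativePair sol.u fun x t ↦ dflux fl fr x (sol.u x t) where
  measurable_density := sol.meas
  measurable_flux := measurable_uncurry_dflux hl.measurable hr.measurable sol.meas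
  bounded := by
    obtain ⟨M, hM⟩ := sol.bdd
    obtain ⟨C, hC⟩ := exists_forall_abs_dflux_le hl hr M
    exact ⟨max M C, fun x t ↦ ⟨(hM x t).trans (le_max_left _ _),
      (hC x _ (hM x t)).trans (le_max_right _ _)⟩⟩
  integral_nonneg φ hφ hφc _ hφz := (sol.weak φ hφ hφc hφz).ge

theorem ABSol.isDissipativePair_neg (hl : Continuous fl) (hr : Continuous fr)
    (sol : ABSol fl fr A B u0) :
    IsDissipativePair (fun x t ↦ -sol.u x t) fun x t ↦ -dflux fl fr x (sol.u x t) where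
  measurable_density := sol.meas.neg
  measurable_flux := (sol.isDissipativePair hl hr).measurable_flux.neg
  bounded := by simpa only [abs_neg] using (sol.isDissipativePair hl hr).bounded
  integral_nonneg φ hφ hφc _ hφz := by
    simp only [neg_mul, ← neg_add, integral_neg, sol.weak φ hφ hφc hφz, neg_zero, le_refl]

theorem ABSol.isDissipativePair_interface (hl : Continuous fl) (hr : Continuous fr)
    (sol : ABSol fl fr A B u0) :
    IsDissipativePair (fun x t ↦ |sol.u x t - cAB A B x|)
      fun x t ↦ dflux (kruzkovFlux fl A) (kruzkovFlux fr B) x (sol.u x t) where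
  measurable_density := (sol.meas.sub (Measurable.ite
    (measurableSet_le measurable_fst measurable_const) measurable_const measurable_const)).abs
  measurable_flux := measurable_uncurry_dflux (continuous_kruzkovFlux hl A).measurable
    (continuous_kruzkovFlux hr B).measurable sol.meas
  bounded := by
    obtain ⟨M, hM⟩ := sol.bdd
    obtain ⟨C, hC⟩ := exists_forall_abs_dflux_le (continuous_kruzkovFlux hl A)
      (continuous_kruzkovFlux hr B) M
    have hc (x : ℝ) : |cAB A B x| ≤ max |A| |B| := by
      unfold cAB
      split_ifs
      · exact le_max_left _ _
      · exact le_max_right _ _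
    refine ⟨max (M + max |A| |B|) C, fun x t ↦ ⟨?_, (hC x _ (hM x t)).trans (le_max_right _ _)⟩⟩
    rw [abs_abs]
    exact ((abs_sub _ _).trans (add_le_add (hM x t) (hc x))).trans (le_max_left _ _)
  integral_nonneg φ hφ hφc hφ0 hφz := by
    refine (sol.interfaceEntropy φ hφ hφc hφ0 hφz).trans_eq (integral_congr_ae ?_)
    have hoff : ∀ᵐ p : ℝ × ℝ, p.1 ≠ 0 := by
      rw [Measure.volume_eq_prod]
      exact Measure.quasiMeasurePreserving_fst.ae (volume.ae_ne 0)
    filter_upwards [hoff] with p hp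
    rcases hp.lt_or_gt with h | h
    · simp only [dflux, cAB, kruzkovFlux, if_pos h, if_pos h.le]
    · simp only [dflux, cAB, kruzkovFlux, if_neg h.not_gt, if_neg h.not_ge]

/-- The integrand of `Fplus`: the flux through the curve `x = α t` computed with right traces. -/
def ABSol.rightFlux (sol : ABSol fl fr A B u0) (α : ℝ → ℝ) : ℝ → ℝ :=
  curveFlux α (fun t ↦ sol.up (α t) t) fun t ↦ dflux fl fr (α t) (sol.up (α t) t)

/-- The integrand of `Fminus`: the flux through the curve `x = α t` computed with left traces. -/
def ABSol.leftFlux (sol : ABSol fl fr A B u0) (α : ℝ → ℝ) : ℝ → ℝ :=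
  curveFlux α (fun t ↦ sol.um (α t) t) fun t ↦ dfluxLeft fl fr (α t) (sol.um (α t) t)

theorem ABSol.rightFlux_eq_leftFlux (hl : Continuous fl) (hr : Continuous fr)
    (sol : ABSol fl fr A B u0) (hα : LipschitzWith K α) :
    ∀ᵐ t, 0 < t → sol.rightFlux α t = sol.leftFlux α t :=
  (sol.isDissipativePair hl hr).curveFlux_eq (sol.isDissipativePair_neg hl hr) hα
    (sol.hasLeftTrace α) (sol.hasRightTrace α) ((sol.hasLeftTrace α).dflux_comp hl hr)
    ((sol.hasRightTrace α).dflux_comp hl hr)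

theorem ABSol.integrableOn_rightFlux (hl : Continuous fl) (hr : Continuous fr)
    (sol : ABSol fl fr A B u0) (hα : LipschitzWith K α) (T : ℝ) :
    IntegrableOn (sol.rightFlux α) (Ioc 0 T) := by
  obtain ⟨M, hM⟩ := (sol.isDissipativePair hl hr).bounded
  have hu := sol.hasRightTrace α
  have hq := hu.dflux_comp hl hr
  have hαm := hα.continuous.measurable
  have hloc := locallyIntegrable_indicator_curveFlux hα (hu.aestronglyMeasurable sol.meas hαm)
    (hq.aestronglyMeasurable (sol.isDissipativePair hl hr).measurable_flux hαm)
    (fun _ ↦ hu.abs_le fun x t ↦ (hM x t).1) fun _ ↦ hq.abs_le fun x t ↦ (hM x t).2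
  refine ((hloc.integrableOn_isCompact isCompact_Icc).mono_set Ioc_subset_Icc_self).congr_fun
    (fun t ht ↦ indicator_of_mem ht.1 _) measurableSet_Ioc

theorem ABSol.interface_flux_ge (hl : ConvexOn ℝ univ fl) (hr : ConvexOn ℝ univ fr)
    (hcl : Differentiable ℝ fl) (hcr : Differentiable ℝ fr) (hAB : fl A = fr B)
    (hA' : deriv fl A ≤ 0) (hB' : 0 ≤ deriv fr B) (sol : ABSol fl fr A B u0) :
    ∀ᵐ t, 0 < t → fl A ≤ fr (sol.up 0 t) := by
  have hzero : LipschitzWith 0 fun _ : ℝ ↦ (0 : ℝ) := LipschitzWith.const 0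
  have hleft : HasLeftTrace (fun x t ↦ |sol.u x t - cAB A B x|) (fun _ ↦ 0)
      fun t ↦ |sol.um 0 t - A| := fun t ht ↦ by
    refine ((sol.um_spec 0 t ht).sub_const A).abs.congr' ?_
    filter_upwards [self_mem_nhdsWithin] with y hy
    rw [cAB, if_pos (le_of_lt hy)]
  have hright : HasRightTrace (fun x t ↦ |sol.u x t - cAB A B x|) (fun _ ↦ 0)
      fun t ↦ |sol.up 0 t - B| := fun t ht ↦ by
    refine ((sol.up_spec 0 t ht).sub_const B).abs.congr' ?_
    filter_upwards [self_mem_nhdsWithin] with y hy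
    rw [cAB, if_neg (not_le.2 hy)]
  have hkl := continuous_kruzkovFlux hcl.continuous A
  have hkr := continuous_kruzkovFlux hcr.continuous B
  filter_upwards [sol.rightFlux_eq_leftFlux hcl.continuous hcr.continuous hzero,
    (sol.isDissipativePair_interface hcl.continuous hcr.continuous).curveFlux_le hzero hleft hright
      ((sol.hasLeftTrace _).dflux_comp hkl hkr) ((sol.hasRightTrace _).dflux_comp hkl hkr)]
    with t hRH hent ht
  refine le_of_kruzkovFlux_le hl hr (hcl A) (hcr B) hAB hA' hB' (vl := sol.um 0 t) ?_ ?_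
  · simpa [ABSol.rightFlux, ABSol.leftFlux, curveFlux, dflux, dfluxLeft] using hRH ht
  · simpa [curveFlux, dflux, dfluxLeft] using hent ht

end Solution

/-! ### Characteristics -/

section Characteristic

variable {fl fr : ℝ → ℝ} {A B γ T : ℝ} {u0 v0 : ℝ → ℝ} {sol : ABSol fl fr A B u0}
  {sol' : ABSol fl fr A B v0} {ζ α : ℝ → ℝ} {t : ℝ} {K : ℝ≥0}

/-- The condition imposed at the time `t` on an `AB`-genuine/interface characteristic `ζ`. -/
def IsABgicAt (fl fr : ℝ → ℝ) (γ : ℝ) (sol : ABSol fl fr A B u0) (ζ : ℝ → ℝ) (t : ℝ) : Prop :=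
  (ζ t < 0 → HasDerivAt ζ (deriv fl (sol.um (ζ t) t)) t ∧
    deriv fl (sol.um (ζ t) t) = deriv fl (sol.up (ζ t) t)) ∧
  (0 < ζ t → HasDerivAt ζ (deriv fr (sol.um (ζ t) t)) t ∧
    deriv fr (sol.um (ζ t) t) = deriv fr (sol.up (ζ t) t)) ∧
  (ζ t = 0 → fl (sol.um 0 t) = γ ∧ fr (sol.up 0 t) = γ)

theorem isABgic_iff : IsABgic T fl fr γ sol ζ ↔
    (∃ K : ℝ≥0, LipschitzOnWith K ζ (Icc 0 T)) ∧
      ∀ᵐ t ∂volume.restrict (Icc 0 T), IsABgicAt fl fr γ sol ζ t :=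
  Iff.rfl

theorem isABgicAt_iff_of_neg (h : ζ t < 0) : IsABgicAt fl fr γ sol ζ t ↔
    HasDerivAt ζ (deriv fl (sol.um (ζ t) t)) t ∧
      deriv fl (sol.um (ζ t) t) = deriv fl (sol.up (ζ t) t) := by
  simp only [IsABgicAt, h, h.not_gt, h.ne, forall_const, false_imp_iff, and_true]

theorem isABgicAt_iff_of_pos (h : 0 < ζ t) : IsABgicAt fl fr γ sol ζ t ↔
    HasDerivAt ζ (deriv fr (sol.um (ζ t) t)) t ∧
      deriv fr (sol.um (ζ t) t) = deriv fr (sol.up (ζ t) t) := by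
  simp only [IsABgicAt, h, h.not_gt, h.ne', forall_const, false_imp_iff, and_true, true_and]

theorem isABgicAt_iff_of_eq_zero (h : ζ t = 0) : IsABgicAt fl fr γ sol ζ t ↔
    fl (sol.um 0 t) = γ ∧ fr (sol.up 0 t) = γ := by
  simp only [IsABgicAt, h, lt_irrefl, forall_const, false_imp_iff, true_and]

theorem isABgicAt_congr (h : ζ =ᶠ[𝓝 t] α) :
    IsABgicAt fl fr γ sol ζ t ↔ IsABgicAt fl fr γ sol α t := by
  simp only [IsABgicAt, h.eq_of_nhds, h.hasDerivAt_iff]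

theorem ABSol.rightFlux_of_neg (sol : ABSol fl fr A B u0) (h : α t < 0) :
    sol.rightFlux α t = fl (sol.up (α t) t) - deriv α t * sol.up (α t) t := by
  simp only [ABSol.rightFlux, curveFlux, dflux, if_pos h]

theorem ABSol.rightFlux_of_nonneg (sol : ABSol fl fr A B u0) (h : 0 ≤ α t) :
    sol.rightFlux α t = fr (sol.up (α t) t) - deriv α t * sol.up (α t) t := by
  simp only [ABSol.rightFlux, curveFlux, dflux, if_neg h.not_gt]

theorem ABSol.leftFlux_of_nonpos (sol : ABSol fl fr A B u0) (h : α t ≤ 0) :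
    sol.leftFlux α t = fl (sol.um (α t) t) - deriv α t * sol.um (α t) t := by
  simp only [ABSol.leftFlux, curveFlux, dfluxLeft, if_pos h]

theorem ABSol.leftFlux_of_pos (sol : ABSol fl fr A B u0) (h : 0 < α t) :
    sol.leftFlux α t = fr (sol.um (α t) t) - deriv α t * sol.um (α t) t := by
  simp only [ABSol.leftFlux, curveFlux, dfluxLeft, if_neg h.not_ge]

theorem IsABgicAt.rightFlux_le (hl : ConvexOn ℝ univ fl) (hr : ConvexOn ℝ univ fr)
    (hdl : Differentiable ℝ fl) (hdr : Differentiable ℝ fr) (h : IsABgicAt fl fr γ sol α t)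
    (hderiv : α t = 0 → deriv α t = 0) (hγ : γ ≤ fr (sol'.up 0 t)) :
    sol.rightFlux α t ≤ sol'.rightFlux α t := by
  rcases lt_trichotomy (α t) 0 with hneg | hzero | hpos
  · obtain ⟨hspeed, hcont⟩ := (isABgicAt_iff_of_neg hneg).1 h
    rw [sol.rightFlux_of_neg hneg, sol'.rightFlux_of_neg hneg, hspeed.deriv, hcont]
    exact isMinOn_sub_deriv_mul hl (by simp) (hdl _) (mem_univ _)
  · have hflux := ((isABgicAt_iff_of_eq_zero hzero).1 h).2
    rw [sol.rightFlux_of_nonneg hzero.ge, sol'.rightFlux_of_nonneg hzero.ge, hderiv hzero, hzero,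
      hflux, zero_mul, zero_mul, sub_zero, sub_zero]
    exact hγ
  · obtain ⟨hspeed, hcont⟩ := (isABgicAt_iff_of_pos hpos).1 h
    rw [sol.rightFlux_of_nonneg hpos.le, sol'.rightFlux_of_nonneg hpos.le, hspeed.deriv, hcont]
    exact isMinOn_sub_deriv_mul hr (by simp) (hdr _) (mem_univ _)

theorem hasDerivAt_iff_eq_of_hasDerivAt {c d : ℝ} (h : HasDerivAt α c t) :
    HasDerivAt α d t ↔ d = c :=
  ⟨fun hd ↦ hd.unique h, fun hd ↦ hd ▸ h⟩

theorem IsABgicAt.rightFlux_eq_iff (hl : StrictConvexOn ℝ univ fl)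
    (hr : StrictConvexOn ℝ univ fr) (hdl : Differentiable ℝ fl) (hdr : Differentiable ℝ fr)
    (h : IsABgicAt fl fr γ sol α t) (hderiv : α t = 0 → deriv α t = 0)
    (hRH : sol'.rightFlux α t = sol'.leftFlux α t) :
    sol.rightFlux α t = sol'.rightFlux α t ↔ IsABgicAt fl fr γ sol' α t := by
  rcases lt_trichotomy (α t) 0 with hneg | hzero | hpos
  · obtain ⟨hspeed, hcont⟩ := (isABgicAt_iff_of_neg hneg).1 h
    rw [hcont] at hspeed
    rw [sol'.rightFlux_of_neg hneg, sol'.leftFlux_of_nonpos hneg.le, hspeed.deriv] at hRH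
    rw [sol.rightFlux_of_neg hneg, sol'.rightFlux_of_neg hneg, hspeed.deriv,
      isABgicAt_iff_of_neg hneg, hasDerivAt_iff_eq_of_hasDerivAt hspeed]
    exact sub_deriv_mul_eq_iff_deriv_eq hl hdl hRH
  · have hflux := ((isABgicAt_iff_of_eq_zero hzero).1 h).2
    rw [sol'.rightFlux_of_nonneg hzero.ge, sol'.leftFlux_of_nonpos hzero.le] at hRH
    simp only [hderiv hzero, hzero, zero_mul, sub_zero] at hRH
    rw [sol.rightFlux_of_nonneg hzero.ge, sol'.rightFlux_of_nonneg hzero.ge,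
      isABgicAt_iff_of_eq_zero hzero]
    simp only [hderiv hzero, hzero, zero_mul, sub_zero, hflux, ← hRH, and_self, eq_comm]
  · obtain ⟨hspeed, hcont⟩ := (isABgicAt_iff_of_pos hpos).1 h
    rw [hcont] at hspeed
    rw [sol'.rightFlux_of_nonneg hpos.le, sol'.leftFlux_of_pos hpos, hspeed.deriv] at hRH
    rw [sol.rightFlux_of_nonneg hpos.le, sol'.rightFlux_of_nonneg hpos.le, hspeed.deriv,
      isABgicAt_iff_of_pos hpos, hasDerivAt_iff_eq_of_hasDerivAt hspeed]
    exact sub_deriv_mul_eq_iff_deriv_eq hr hdr hRH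

theorem IsABgic.congr (h : EqOn ζ α (Icc 0 T)) (hζ : IsABgic T fl fr γ sol ζ) :
    IsABgic T fl fr γ sol α := by
  obtain ⟨⟨K, hK⟩, hgic⟩ := isABgic_iff.1 hζ
  refine isABgic_iff.2 ⟨⟨K, fun s hs t ht ↦ h hs ▸ h ht ▸ hK hs ht⟩, ?_⟩
  rw [← Measure.restrict_congr_set Ioo_ae_eq_Icc] at hgic ⊢
  filter_upwards [hgic, ae_restrict_mem measurableSet_Ioo] with t hgt ht
  exact (isABgicAt_congr (h.eventuallyEq_of_mem (Icc_mem_nhds ht.1 ht.2))).1 hgt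

theorem Fplus_eq_setIntegral_rightFlux (hT : 0 ≤ T) (sol : ABSol fl fr A B u0) (α : ℝ → ℝ) :
    Fplus fl fr T sol 0 α = ∫ t in Ioc 0 T, sol.rightFlux α t :=
  intervalIntegral.integral_of_le hT

theorem Fplus_congr (hT : 0 ≤ T) (sol : ABSol fl fr A B u0) (h : EqOn ζ α (Icc 0 T)) :
    Fplus fl fr T sol 0 ζ = Fplus fl fr T sol 0 α := by
  simp only [Fplus_eq_setIntegral_rightFlux hT, integral_Ioc_eq_integral_Ioo]
  refine setIntegral_congr_fun measurableSet_Ioo fun t ht ↦ ?_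
  have hgerm := h.eventuallyEq_of_mem (Icc_mem_nhds ht.1 ht.2)
  simp only [ABSol.rightFlux, curveFlux, hgerm.eq_of_nhds, hgerm.deriv_eq]

theorem IsABgic.Fplus_eq_iff_of_lipschitzWith (hT : 0 ≤ T) (hl : StrictConvexOn ℝ univ fl)
    (hr : StrictConvexOn ℝ univ fr) (hdl : Differentiable ℝ fl) (hdr : Differentiable ℝ fr)
    (hAB : fl A = fr B) (hA' : deriv fl A ≤ 0) (hB' : 0 ≤ deriv fr B) (hα : LipschitzWith K α)
    (h : IsABgic T fl fr (fl A) sol α) :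
    Fplus fl fr T sol' 0 α = Fplus fl fr T sol 0 α ↔ IsABgic T fl fr (fl A) sol' α := by
  have hrestrict : volume.restrict (Icc 0 T) = volume.restrict (Ioc 0 T) :=
    Measure.restrict_congr_set Ioc_ae_eq_Icc.symm
  have hgic := (isABgic_iff.1 h).2
  rw [hrestrict] at hgic
  have hcl := hdl.continuous
  have hcr := hdr.continuous
  have hle : sol.rightFlux α ≤ᵐ[volume.restrict (Ioc 0 T)] sol'.rightFlux α := by
    filter_upwards [hgic, ae_restrict_mem measurableSet_Ioc,
      ae_restrict_of_ae (ae_deriv_eq_zero_of_eq_zero α), ae_restrict_of_ae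
        (sol'.interface_flux_ge hl.convexOn hr.convexOn hdl hdr hAB hA' hB')] with t hgt ht hz hγ
    exact hgt.rightFlux_le hl.convexOn hr.convexOn hdl hdr hz (hγ ht.1)
  have heq : ∀ᵐ t ∂volume.restrict (Ioc 0 T),
      sol.rightFlux α t = sol'.rightFlux α t ↔ IsABgicAt fl fr (fl A) sol' α t := by
    filter_upwards [hgic, ae_restrict_mem measurableSet_Ioc,
      ae_restrict_of_ae (ae_deriv_eq_zero_of_eq_zero α),
      ae_restrict_of_ae (sol'.rightFlux_eq_leftFlux hcl hcr hα)] with t hgt ht hz hRH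
    exact hgt.rightFlux_eq_iff hl hr hdl hdr hz (hRH ht.1)
  rw [eq_comm, Fplus_eq_setIntegral_rightFlux hT, Fplus_eq_setIntegral_rightFlux hT,
    integral_eq_iff_of_ae_le (sol.integrableOn_rightFlux hcl hcr hα T)
      (sol'.integrableOn_rightFlux hcl hcr hα T) hle, isABgic_iff, hrestrict]
  exact (eventually_congr heq).trans (and_iff_right ⟨K, hα.lipschitzOnWith⟩).symm

end Characteristic

theorem flux_functional_equality_iff_general {T A B : ℝ} {fl fr : ℝ → ℝ} (hT : 0 ≤ T)
    (hl : StrictConvexOn ℝ univ fl) (hr : StrictConvexOn ℝ univ fr)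
    (hdl : Differentiable ℝ fl) (hdr : Differentiable ℝ fr)
    (hAB : fl A = fr B) (hA' : deriv fl A ≤ 0) (hB' : 0 ≤ deriv fr B)
    {ua0 ub0 : ℝ → ℝ} (usol : ABSol fl fr A B ua0) (ustar : ABSol fl fr A B ub0)
    (x : ℝ) (ζ : ℝ → ℝ) (hζ : ζ ∈ charSet T fl fr (fl A) ustar x) :
    Fplus fl fr T usol 0 ζ = Fplus fl fr T ustar 0 ζ ↔
      ζ ∈ charSet T fl fr (fl A) ustar x ∩ charSet T fl fr (fl A) usol x := by
  obtain ⟨K, hK⟩ := hζ.1.1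
  obtain ⟨α, hα, hζα⟩ := hK.extend_real
  have hcriterion := (hζ.1.congr hζα).Fplus_eq_iff_of_lipschitzWith (sol' := usol) hT hl hr hdl hdr
    hAB hA' hB' hα
  rw [Fplus_congr hT usol hζα, Fplus_congr hT ustar hζα, hcriterion]
  exact ⟨fun h ↦ ⟨hζ, h.congr hζα.symm, hζ.2⟩, fun h ↦ h.2.1.congr hζα⟩

/-- equality of the flux functionals holds iff `ζ` is a common
AB-genuine/interface characteristic of `u^*` and `u`
(second part of Lemma 4.8 of the paper). -/
theorem flux_functional_equality_iff
    {T a θl θr A B : ℝ} {fl fr : ℝ → ℝ}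
    (hT : 0 < T)
    (hflC : ContDiff ℝ 2 fl) (hfrC : ContDiff ℝ 2 fr)
    (ha : 0 < a)
    (hfl2 : ∀ w : ℝ, a ≤ deriv (deriv fl) w)
    (hfr2 : ∀ w : ℝ, a ≤ deriv (deriv fr) w)
    (hf0 : fl 0 = fr 0) (hf1 : fl 1 = fr 1)
    (hθl : deriv fl θl = 0) (hθr : deriv fr θr = 0)
    (hθl0 : 0 ≤ θl) (hθr1 : θr ≤ 1)
    (hAB : fl A = fr B) (hA' : deriv fl A ≤ 0) (hB' : 0 ≤ deriv fr B)
    {ua0 ub0 : ℝ → ℝ} (hua0 : IsLinf ua0) (hub0 : IsLinf ub0)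
    (usol : ABSol fl fr A B ua0) (ustar : ABSol fl fr A B ub0)
    (x : ℝ) (ζ : ℝ → ℝ) (hζ : ζ ∈ charSet T fl fr (fl A) ustar x) :
    Fplus fl fr T usol 0 ζ = Fplus fl fr T ustar 0 ζ ↔
      ζ ∈ charSet T fl fr (fl A) ustar x ∩ charSet T fl fr (fl A) usol x := by
  exact flux_functional_equality_iff_general hT.le
    (strictConvexOn_univ_of_deriv2_pos hflC.continuous fun w ↦ ha.trans_le (hfl2 w))
    (strictConvexOn_univ_of_deriv2_pos hfrC.continuous fun w ↦ ha.trans_le (hfr2 w))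
    (hflC.differentiable two_ne_zero) (hfrC.differentiable two_ne_zero) hAB hA' hB'
    usol ustar x ζ hζ
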